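/- The right quantum-group boundary operator b_r is an idempotent U_q(sl_2)-intertwiner with blob weight y_r = [α_r+1]_q/[α_r]_q: b_r² = b_r; b_r commutes with the coproduct actions Δ(E), Δ(F), Δ(K^{±1}) on ℂ²⊗V_{α_r}; and on ℂ²⊗ℂ²⊗V_{α_r} one has e ∘ (Id_{ℂ²}⊗b_r) ∘ e = ([α_r+1]_q/[α_r]_q) · e, where e acts as the Temperley–Lieb matrix on the two ℂ² factors and b_r acts on the second ℂ² factor and V_{α_r}. -/

import Mathlib

noncomputable section

/-- The Verma module `V_α`: finitely supported complex sequences, basis `|n⟩`. -/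
abbrev Verma : Type := ℕ →₀ ℂ

/-- The basis vector `|n⟩`. -/
noncomputable def ket (n : ℕ) : Verma := Finsupp.single n 1

/-- The linear operator on `Verma` determined by its values on the basis vectors. -/
noncomputable def ladderOp (t : ℕ → Verma) : Module.End ℂ Verma :=
  Finsupp.lsum ℂ fun n => LinearMap.toSpanSingleton ℂ Verma (t n)

/-- The q-deformed number `[x]_q` with `q = e^h`. -/
noncomputable def qnum (h x : ℂ) : ℂ :=
  (Complex.exp (h * x) - Complex.exp (-(h * x))) / (Complex.exp h - Complex.exp (-h))

/-- `E |n⟩ = [n]_q [α−n]_q |n−1⟩`, `E |0⟩ = 0`. -/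
noncomputable def Eop (h α : ℂ) : Module.End ℂ Verma :=
  ladderOp fun n => if n = 0 then 0 else (qnum h n * qnum h (α - n)) • ket (n - 1)

/-- `F |n⟩ = |n+1⟩`. -/
noncomputable def Fop : Module.End ℂ Verma := ladderOp fun n => ket (n + 1)

/-- `K |n⟩ = q^{α−1−2n} |n⟩`. -/
noncomputable def Kop (h α : ℂ) : Module.End ℂ Verma :=
  ladderOp fun n => Complex.exp (h * (α - 1 - 2 * n)) • ket n

/-- `K⁻¹ |n⟩ = q^{−(α−1−2n)} |n⟩`. -/
noncomputable def Kinv (h α : ℂ) : Module.End ℂ Verma :=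
  ladderOp fun n => Complex.exp (-(h * (α - 1 - 2 * n))) • ket n

/-- Operators on `ℂ² ⊗ V_{α_r}` as 2×2 matrices with entries in `End(V_{α_r})`
(rows/columns indexed by the `ℂ²` basis `↑, ↓`). -/
abbrev Op2 : Type := Matrix (Fin 2) (Fin 2) (Module.End ℂ Verma)

/-- The right boundary projector `b_r` on `ℂ² ⊗ V_{α_r}`. -/
noncomputable def bR (h αr : ℂ) : Op2 :=
  (Complex.exp (h * αr) - Complex.exp (-(h * αr)))⁻¹ •
    !![Complex.exp h • Kop h αr - Complex.exp (-(h * αr)) • 1,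
        (Complex.exp h * (Complex.exp h - Complex.exp (-h))) • (Kop h αr * Fop);
        (Complex.exp h - Complex.exp (-h)) • Eop h αr,
        (-Complex.exp (-h)) • Kop h αr + Complex.exp (h * αr) • 1]

/-- The coproduct action `Δ(E) = 1⊗E + E⊗K` on `ℂ² ⊗ V_{α_r}`. -/
noncomputable def coE (h αr : ℂ) : Op2 := !![Eop h αr, Kop h αr; 0, Eop h αr]

/-- The coproduct action `Δ(F) = K⁻¹⊗F + F⊗1` on `ℂ² ⊗ V_{α_r}`. -/
noncomputable def coF (h : ℂ) : Op2 :=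
  !![Complex.exp (-h) • Fop, 0; 1, Complex.exp h • Fop]

/-- The coproduct action `Δ(K) = K⊗K` on `ℂ² ⊗ V_{α_r}`. -/
noncomputable def coK (h αr : ℂ) : Op2 :=
  !![Complex.exp h • Kop h αr, 0; 0, Complex.exp (-h) • Kop h αr]

/-- The coproduct action `Δ(K⁻¹) = K⁻¹⊗K⁻¹` on `ℂ² ⊗ V_{α_r}`. -/
noncomputable def coKinv (h αr : ℂ) : Op2 :=
  !![Complex.exp (-h) • Kinv h αr, 0; 0, Complex.exp h • Kinv h αr]

/-- Operators on `ℂ² ⊗ ℂ² ⊗ V_{α_r}` as matrices with entries in `End(V_{α_r})`, indexed by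
pairs (state of the first `ℂ²`, state of the second `ℂ²`). -/
abbrev Op4 : Type := Matrix (Fin 2 × Fin 2) (Fin 2 × Fin 2) (Module.End ℂ Verma)

/-- The Temperley–Lieb matrix on `ℂ² ⊗ ℂ²` (ordered basis ↑↑, ↑↓, ↓↑, ↓↓):
rows (0,0,0,0), (0, q, −1, 0), (0, −1, q⁻¹, 0), (0,0,0,0). -/
noncomputable def eTL (h : ℂ) : Matrix (Fin 2 × Fin 2) (Fin 2 × Fin 2) ℂ :=
  Matrix.of fun p r =>
    if p = ((0 : Fin 2), (1 : Fin 2)) ∧ r = ((0 : Fin 2), (1 : Fin 2)) then Complex.exp h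
    else if p = ((0 : Fin 2), (1 : Fin 2)) ∧ r = ((1 : Fin 2), (0 : Fin 2)) then -1
    else if p = ((1 : Fin 2), (0 : Fin 2)) ∧ r = ((0 : Fin 2), (1 : Fin 2)) then -1
    else if p = ((1 : Fin 2), (0 : Fin 2)) ∧ r = ((1 : Fin 2), (0 : Fin 2)) then
      Complex.exp (-h)
    else 0

/-- `e` acting on the two `ℂ²` factors of `ℂ² ⊗ ℂ² ⊗ V_{α_r}`, identity on `V_{α_r}`. -/
noncomputable def eOp4 (h : ℂ) : Op4 :=
  Matrix.of fun p r => eTL h p r • (1 : Module.End ℂ Verma)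

/-- `Id_{ℂ²} ⊗ b_r`: the operator `b_r` acting on the second `ℂ²` factor and `V_{α_r}`. -/
noncomputable def bSnd (h αr : ℂ) : Op4 :=
  Matrix.of fun p r => if p.1 = r.1 then bR h αr p.2 r.2 else 0

/-! `b_r` is a spectral projector of the coproduct Casimir. On `V_α` the Casimir
`C = (q - q⁻¹)² F E + q K + q⁻¹ K⁻¹` is the scalar `a + a⁻¹`, where `a = q ^ α`. On
`ℂ² ⊗ V_α ≅ V_{α+1} ⊕ V_{α-1}` it takes the two values `q a + (q a)⁻¹` and `q a⁻¹ + q⁻¹ a`, and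
`b_r` is `Δ(C) - (q a⁻¹ + q⁻¹ a)` divided by their difference. Hence `b_r` commutes with the
coproduct action because `C` is central. Idempotence is an entrywise computation of the matrix
square, in which the scalar value of `C` eliminates `F E` and `E F`. For the blob weight, `e` is a
rank-one matrix, so `e (Id ⊗ b) e` is `e` times the quantum trace `q⁻¹ b_{↑↑} + q b_{↓↓}`, in which
the operators `K` cancel. -/

/-- The defining relations of `U_q(sl₂)`, for elements `E, F, K, K'` of an algebra, where `K'` plays
the role of `K⁻¹`. Division by `q - q⁻¹` in the commutator `[E, F]` is avoided. -/
structure IsQuantumSl2Triple {𝕜 A : Type*} [Field 𝕜] [Ring A] [Algebra 𝕜 A] (q : 𝕜)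
    (E F K K' : A) : Prop where
  K_mul_K' : K * K' = 1
  K'_mul_K : K' * K = 1
  K_mul_E : K * E = q ^ 2 • (E * K)
  F_mul_K : F * K = q ^ 2 • (K * F)
  commutator : (q - q⁻¹) • (E * F - F * E) = K - K'

/-- The quadratic Casimir element of `U_q(sl₂)`, normalised by the factor `(q - q⁻¹)²` so that no
division occurs. -/
def quantumCasimir {𝕜 A : Type*} [Field 𝕜] [Ring A] [Algebra 𝕜 A] (q : 𝕜) (E F K K' : A) : A :=
  (q - q⁻¹) ^ 2 • (F * E) + q • K + q⁻¹ • K'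

/-- The image of the Casimir element under the coproduct, acting on `ℂ² ⊗ V` with the spin-1/2
representation on `ℂ²`, as a matrix over the algebra acting on `V`. -/
def coproductCasimir {𝕜 A : Type*} [Field 𝕜] [Ring A] [Algebra 𝕜 A] (q : 𝕜) (E F K K' : A) :
    Matrix (Fin 2) (Fin 2) A :=
  quantumCasimir q !![E, K; 0, E] !![q⁻¹ • F, 0; 1, q • F]
    !![q • K, 0; 0, q⁻¹ • K] !![q⁻¹ • K', 0; 0, q • K']

/-- The boundary operator `b` on `ℂ² ⊗ V` multiplied by `a - a⁻¹`, for operators `E, F, K` in an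
arbitrary algebra; `a` stands for `q ^ α`. -/
def boundaryMatrix {𝕜 A : Type*} [Field 𝕜] [Ring A] [Algebra 𝕜 A] (q a : 𝕜) (E F K : A) :
    Matrix (Fin 2) (Fin 2) A :=
  !![q • K - a⁻¹ • 1, (q * (q - q⁻¹)) • (K * F);
    (q - q⁻¹) • E, (-q⁻¹) • K + a • 1]

/-- The boundary operator `b` on `ℂ² ⊗ V`, for operators `E, F, K` in an arbitrary algebra; `a`
stands for `q ^ α`. -/
def boundaryProjector {𝕜 A : Type*} [Field 𝕜] [Ring A] [Algebra 𝕜 A] (q a : 𝕜) (E F K : A) :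
    Matrix (Fin 2) (Fin 2) A :=
  (a - a⁻¹)⁻¹ • boundaryMatrix q a E F K

section FinTwo

variable {A : Type*} {x y z w x' y' z' w' : A}

theorem matrix_fin_two_congr (hx : x = x') (hy : y = y') (hz : z = z') (hw : w = w') :
    !![x, y; z, w] = !![x', y'; z', w'] := by
  rw [hx, hy, hz, hw]

theorem matrix_add_fin_two [Add A] :
    !![x, y; z, w] + !![x', y'; z', w'] = !![x + x', y + y'; z + z', w + w'] := by
  simp

theorem matrix_sub_fin_two [Sub A] :
    !![x, y; z, w] - !![x', y'; z', w'] = !![x - x', y - y'; z - z', w - w'] := by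
  simp

theorem matrix_smul_fin_two {R : Type*} [SMul R A] (r : R) :
    r • !![x, y; z, w] = !![r • x, r • y; r • z, r • w] := by
  simp

end FinTwo

namespace IsQuantumSl2Triple

variable {𝕜 A : Type*} [Field 𝕜] [Ring A] [Algebra 𝕜 A] {q a : 𝕜} {E F K K' : A}

theorem E_mul_K' (t : IsQuantumSl2Triple q E F K K') : E * K' = q ^ 2 • (K' * E) :=
  calc
    E * K' = K' * (K * E) * K' := by rw [← mul_assoc, t.K'_mul_K, one_mul]
    _ = q ^ 2 • (K' * E * (K * K')) := by
      rw [t.K_mul_E, mul_smul_comm, smul_mul_assoc]; simp only [mul_assoc]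
    _ = q ^ 2 • (K' * E) := by rw [t.K_mul_K', mul_one]

theorem K'_mul_F (t : IsQuantumSl2Triple q E F K K') : K' * F = q ^ 2 • (F * K') :=
  calc
    K' * F = K' * (F * K) * K' := by rw [mul_assoc, mul_assoc, t.K_mul_K', mul_one]
    _ = q ^ 2 • (K' * K * (F * K')) := by
      rw [t.F_mul_K, mul_smul_comm, smul_mul_assoc]; simp only [mul_assoc]
    _ = q ^ 2 • (F * K') := by rw [t.K'_mul_K, one_mul]

theorem quantumCasimir_eq_E_mul_F (t : IsQuantumSl2Triple q E F K K') :
    quantumCasimir q E F K K' = (q - q⁻¹) ^ 2 • (E * F) + q⁻¹ • K + q • K' := by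
  have hEF : (q - q⁻¹) ^ 2 • (E * F) = (q - q⁻¹) ^ 2 • (F * E) + (q - q⁻¹) • (K - K') := by
    rw [← t.commutator]; module
  rw [hEF, quantumCasimir]
  module

theorem commute_quantumCasimir_E (hq : q ≠ 0) (t : IsQuantumSl2Triple q E F K K') :
    Commute (quantumCasimir q E F K K') E := by
  have hEK : q • (E * K) = q⁻¹ • (K * E) := by
    rw [t.K_mul_E]; match_scalars; field_simp
  have hK'E : q⁻¹ • (E * K') = q • (K' * E) := by
    rw [t.E_mul_K']; match_scalars; field_simp
  calc
    quantumCasimir q E F K K' * E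
        = (q - q⁻¹) ^ 2 • (E * F * E) + q⁻¹ • (K * E) + q • (K' * E) := by
      simp only [t.quantumCasimir_eq_E_mul_F, add_mul, smul_mul_assoc]
    _ = (q - q⁻¹) ^ 2 • (E * F * E) + q • (E * K) + q⁻¹ • (E * K') := by rw [hEK, hK'E]
    _ = E * quantumCasimir q E F K K' := by
      simp only [quantumCasimir, mul_add, mul_smul_comm, mul_assoc]

theorem commute_quantumCasimir_F (hq : q ≠ 0) (t : IsQuantumSl2Triple q E F K K') :
    Commute (quantumCasimir q E F K K') F := by
  have hFK : q⁻¹ • (F * K) = q • (K * F) := by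
    rw [t.F_mul_K]; match_scalars; field_simp
  have hK'F : q • (F * K') = q⁻¹ • (K' * F) := by
    rw [t.K'_mul_F]; match_scalars; field_simp
  calc
    quantumCasimir q E F K K' * F
        = (q - q⁻¹) ^ 2 • (F * E * F) + q • (K * F) + q⁻¹ • (K' * F) := by
      simp only [quantumCasimir, add_mul, smul_mul_assoc]
    _ = (q - q⁻¹) ^ 2 • (F * E * F) + q⁻¹ • (F * K) + q • (F * K') := by rw [hFK, hK'F]
    _ = F * quantumCasimir q E F K K' := by
      simp only [t.quantumCasimir_eq_E_mul_F, mul_add, mul_smul_comm, mul_assoc]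

theorem commute_quantumCasimir_K (hq : q ≠ 0) (t : IsQuantumSl2Triple q E F K K') :
    Commute (quantumCasimir q E F K K') K := by
  have hFE : Commute (F * E) K := smul_right_injective A (pow_ne_zero 2 hq) <|
    calc
      q ^ 2 • (F * E * K) = F * (K * E) := by rw [t.K_mul_E, mul_smul_comm, mul_assoc]
      _ = q ^ 2 • (K * (F * E)) := by rw [← mul_assoc, t.F_mul_K, smul_mul_assoc, mul_assoc]
  have hK' : Commute K' K := t.K'_mul_K.trans t.K_mul_K'.symm
  exact ((hFE.smul_left _).add_left ((Commute.refl K).smul_left q)).add_left (hK'.smul_left q⁻¹)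

theorem commute_quantumCasimir_K' (hq : q ≠ 0) (t : IsQuantumSl2Triple q E F K K') :
    Commute (quantumCasimir q E F K K') K' :=
  (t.commute_quantumCasimir_K hq).units_inv_right (u := ⟨K, K', t.K_mul_K', t.K'_mul_K⟩)

theorem spinHalf_coproduct (hq : q ≠ 0) (t : IsQuantumSl2Triple q E F K K') :
    IsQuantumSl2Triple q !![E, K; 0, E] !![q⁻¹ • F, 0; 1, q • F]
      !![q • K, 0; 0, q⁻¹ • K] !![q⁻¹ • K', 0; 0, q • K'] where
  K_mul_K' := by simp [Matrix.one_fin_two, smul_smul, hq, t.K_mul_K']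
  K'_mul_K := by simp [Matrix.one_fin_two, smul_smul, hq, t.K'_mul_K]
  K_mul_E := by
    simp only [Matrix.mul_fin_two, matrix_smul_fin_two, zero_mul, mul_zero, add_zero, zero_add,
      smul_zero, smul_mul_assoc, mul_smul_comm, t.K_mul_E]
    refine matrix_fin_two_congr ?_ ?_ rfl ?_ <;> match_scalars <;> field_simp
  F_mul_K := by
    simp only [Matrix.mul_fin_two, matrix_smul_fin_two, zero_mul, mul_zero, add_zero, zero_add,
      smul_zero, smul_mul_assoc, mul_smul_comm, one_mul, mul_one, t.F_mul_K]
    refine matrix_fin_two_congr ?_ rfl ?_ ?_ <;> match_scalars <;> field_simp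
  commutator := by
    simp only [Matrix.mul_fin_two, matrix_sub_fin_two, matrix_smul_fin_two, zero_mul, mul_zero,
      add_zero, zero_add, smul_mul_assoc, mul_smul_comm, one_mul, mul_one, t.F_mul_K]
    refine matrix_fin_two_congr ?_ ?_ ?_ ?_
    · calc
        _ = q⁻¹ • ((q - q⁻¹) • (E * F - F * E)) + (q - q⁻¹) • K := by module
        _ = q • K - q⁻¹ • K' := by rw [t.commutator]; module
    · have h_inv_mul_sq : q⁻¹ * q ^ 2 = q := by field_simp
      rw [smul_smul, h_inv_mul_sq, sub_self, smul_zero, sub_zero]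
    · module
    · calc
        _ = q • ((q - q⁻¹) • (E * F - F * E)) - (q - q⁻¹) • K := by module
        _ = q⁻¹ • K - q • K' := by rw [t.commutator]; module

theorem coproductCasimir_eq (hq : q ≠ 0) (t : IsQuantumSl2Triple q E F K K') :
    coproductCasimir q E F K K' =
      q⁻¹ • !![quantumCasimir q E F K K', 0; 0, quantumCasimir q E F K K'] + (q - q⁻¹) •
        !![q • K, (q * (q - q⁻¹)) • (K * F);
          (q - q⁻¹) • E, (-q⁻¹) • K + quantumCasimir q E F K K'] := by
  simp only [coproductCasimir, quantumCasimir, Matrix.mul_fin_two, matrix_add_fin_two,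
    matrix_smul_fin_two, zero_mul, mul_zero, add_zero, zero_add, smul_zero, smul_mul_assoc, one_mul,
    t.F_mul_K]
  refine matrix_fin_two_congr ?_ ?_ ?_ ?_ <;> match_scalars <;> field_simp <;> ring

theorem boundaryProjector_eq_coproductCasimir (hq : q ≠ 0) (hδ : q - q⁻¹ ≠ 0)
    (t : IsQuantumSl2Triple q E F K K') (hC : quantumCasimir q E F K K' = (a + a⁻¹) • 1) :
    boundaryProjector q a E F K =
      ((q - q⁻¹) * (a - a⁻¹))⁻¹ • (coproductCasimir q E F K K' - (q * a⁻¹ + q⁻¹ * a) • 1) := by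
  have h_sub : coproductCasimir q E F K K' - (q * a⁻¹ + q⁻¹ * a) • 1 =
      (q - q⁻¹) • boundaryMatrix q a E F K := by
    rw [t.coproductCasimir_eq hq, hC, boundaryMatrix]
    simp only [Matrix.one_fin_two, matrix_add_fin_two, matrix_sub_fin_two, matrix_smul_fin_two]
    refine matrix_fin_two_congr ?_ ?_ ?_ ?_ <;> module
  rw [h_sub, smul_smul, mul_inv_rev, inv_mul_cancel_right₀ hδ, boundaryProjector]

theorem commute_boundaryProjector (hq : q ≠ 0) (hδ : q - q⁻¹ ≠ 0)
    (t : IsQuantumSl2Triple q E F K K') (hC : quantumCasimir q E F K K' = (a + a⁻¹) • 1)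
    {X : Matrix (Fin 2) (Fin 2) A} (hX : Commute (coproductCasimir q E F K K') X) :
    Commute (boundaryProjector q a E F K) X := by
  rw [t.boundaryProjector_eq_coproductCasimir hq hδ hC]
  exact (hX.sub_left ((Commute.one_left X).smul_left _)).smul_left _

theorem smul_K_mul_F_mul_smul_E (t : IsQuantumSl2Triple q E F K K')
    (hC : quantumCasimir q E F K K' = (a + a⁻¹) • 1) :
    (q * (q - q⁻¹)) • (K * F) * (q - q⁻¹) • E =
      q • ((a + a⁻¹) • K - q • (K * K) - q⁻¹ • 1) := by
  have hKC := congrArg (K * ·) hC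
  simp only [quantumCasimir, mul_add, mul_smul_comm, t.K_mul_K', mul_one] at hKC
  rw [← hKC, smul_mul_smul_comm, mul_assoc K F E]
  module

theorem smul_E_mul_smul_K_mul_F (hq : q ≠ 0) (t : IsQuantumSl2Triple q E F K K')
    (hC : quantumCasimir q E F K K' = (a + a⁻¹) • 1) :
    (q - q⁻¹) • E * (q * (q - q⁻¹)) • (K * F) =
      q⁻¹ • ((a + a⁻¹) • K - q⁻¹ • (K * K) - q • 1) := by
  have hCK := congrArg (· * K) (t.quantumCasimir_eq_E_mul_F.symm.trans hC)
  simp only [add_mul, smul_mul_assoc, t.K'_mul_K, one_mul, mul_assoc, t.F_mul_K,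
    mul_smul_comm] at hCK
  rw [← hCK, smul_mul_smul_comm]
  match_scalars <;> field_simp <;> ring

theorem boundaryMatrix_mul_self (hq : q ≠ 0) (ha : a ≠ 0)
    (t : IsQuantumSl2Triple q E F K K') (hC : quantumCasimir q E F K K' = (a + a⁻¹) • 1) :
    boundaryMatrix q a E F K * boundaryMatrix q a E F K =
      (a - a⁻¹) • boundaryMatrix q a E F K := by
  have h00 : (q • K - a⁻¹ • 1) * (q • K - a⁻¹ • 1) +
      (q * (q - q⁻¹)) • (K * F) * (q - q⁻¹) • E = (a - a⁻¹) • (q • K - a⁻¹ • 1) := by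
    rw [t.smul_K_mul_F_mul_smul_E hC]
    simp only [sub_mul, mul_sub, smul_mul_assoc, mul_smul_comm, one_mul, mul_one]
    match_scalars <;> field_simp <;> ring
  have h01 : (q • K - a⁻¹ • 1) * (q * (q - q⁻¹)) • (K * F) +
      (q * (q - q⁻¹)) • (K * F) * ((-q⁻¹) • K + a • 1) =
        (a - a⁻¹) • (q * (q - q⁻¹)) • (K * F) := by
    simp only [sub_mul, mul_add, smul_mul_assoc, mul_smul_comm, one_mul, mul_one, mul_assoc,
      t.F_mul_K]
    match_scalars <;> field_simp <;> ring
  have h10 : (q - q⁻¹) • E * (q • K - a⁻¹ • 1) + ((-q⁻¹) • K + a • 1) * (q - q⁻¹) • E =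
      (a - a⁻¹) • (q - q⁻¹) • E := by
    simp only [mul_sub, add_mul, smul_mul_assoc, mul_smul_comm, one_mul, mul_one, t.K_mul_E]
    match_scalars <;> field_simp <;> ring
  have h11 : (q - q⁻¹) • E * (q * (q - q⁻¹)) • (K * F) +
      ((-q⁻¹) • K + a • 1) * ((-q⁻¹) • K + a • 1) = (a - a⁻¹) • ((-q⁻¹) • K + a • 1) := by
    rw [t.smul_E_mul_smul_K_mul_F hq hC]
    simp only [add_mul, mul_add, smul_mul_assoc, mul_smul_comm, one_mul, mul_one]
    match_scalars <;> field_simp <;> ring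
  rw [boundaryMatrix, Matrix.mul_fin_two, h00, h01, h10, h11, matrix_smul_fin_two]

theorem isIdempotentElem_boundaryProjector (hq : q ≠ 0) (ha : a - a⁻¹ ≠ 0)
    (t : IsQuantumSl2Triple q E F K K') (hC : quantumCasimir q E F K K' = (a + a⁻¹) • 1) :
    IsIdempotentElem (boundaryProjector q a E F K) := by
  have ha0 : a ≠ 0 := by
    rintro rfl
    simp at ha
  rw [IsIdempotentElem, boundaryProjector, smul_mul_smul_comm, t.boundaryMatrix_mul_self hq ha0 hC,
    smul_smul, mul_assoc, inv_mul_cancel₀ ha, mul_one]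

end IsQuantumSl2Triple

section QuantumTrace

open scoped Kronecker

/-- The vector `q |↑↓⟩ - |↓↑⟩` of `ℂ² ⊗ ℂ²` spanning the image of the Temperley–Lieb matrix. -/
def qSinglet (h : ℂ) : Fin 2 × Fin 2 → ℂ :=
  fun p => !![0, Complex.exp h; -1, 0] p.1 p.2

theorem eTL_eq_vecMulVec (h : ℂ) :
    eTL h = Matrix.vecMulVec (qSinglet h) (Complex.exp (-h) • qSinglet h) := by
  ext ⟨i, i'⟩ ⟨j, j'⟩
  fin_cases i <;> fin_cases i' <;> fin_cases j <;> fin_cases j' <;>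
    simp [eTL, qSinglet, Matrix.vecMulVec_apply, Complex.exp_neg]

theorem map_vecMulVec_mul_mul_map_vecMulVec {𝕜 A n : Type*} [CommSemiring 𝕜] [Semiring A]
    [Algebra 𝕜 A] [Fintype n]
    (u v w z : n → 𝕜) (X : Matrix n n A) :
    (Matrix.vecMulVec u v).map (algebraMap 𝕜 A) * X * (Matrix.vecMulVec w z).map (algebraMap 𝕜 A) =
      (Matrix.vecMulVec u z).map (· • ∑ s, ∑ t, (v s * w t) • X s t) := by
  ext p r
  simp only [Matrix.mul_apply, Matrix.vecMulVec_apply, Matrix.map_apply,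
    Algebra.algebraMap_eq_smul_one, smul_mul_assoc, one_mul, mul_smul_comm, mul_one,
    Finset.smul_sum, smul_smul]
  rw [Finset.sum_comm]
  refine Finset.sum_congr rfl fun s _ => Finset.sum_congr rfl fun t _ => ?_
  ring_nf

/-- The quantum trace `q⁻¹ B_{↑↑} + q B_{↓↓}` over the factor `ℂ²` of an operator on `ℂ² ⊗ V`. -/
def quantumTrace {𝕜 A : Type*} [Field 𝕜] [Ring A] [Algebra 𝕜 A] (q : 𝕜)
    (B : Matrix (Fin 2) (Fin 2) A) : A :=
  q⁻¹ • B 0 0 + q • B 1 1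

theorem sum_qSinglet_mul_qSinglet_smul {A : Type*} [Ring A] [Algebra ℂ A] (h : ℂ)
    (B : Matrix (Fin 2) (Fin 2) A) :
    ∑ s, ∑ t, ((Complex.exp (-h) • qSinglet h) s * qSinglet h t) •
        ((1 : Matrix (Fin 2) (Fin 2) A) ⊗ₖ B) s t = quantumTrace (Complex.exp h) B := by
  simp [Fintype.sum_prod_type, qSinglet, quantumTrace, Complex.exp_neg, add_comm]

theorem eTL_mul_kronecker_mul_eTL {A : Type*} [Ring A] [Algebra ℂ A] (h : ℂ)
    (B : Matrix (Fin 2) (Fin 2) A) :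
    (eTL h).map (algebraMap ℂ A) * ((1 : Matrix (Fin 2) (Fin 2) A) ⊗ₖ B) *
      (eTL h).map (algebraMap ℂ A) = (eTL h).map (· • quantumTrace (Complex.exp h) B) := by
  rw [eTL_eq_vecMulVec, map_vecMulVec_mul_mul_map_vecMulVec, sum_qSinglet_mul_qSinglet_smul]

theorem quantumTrace_boundaryProjector {𝕜 A : Type*} [Field 𝕜] [Ring A] [Algebra 𝕜 A] {q : 𝕜}
    (hq : q ≠ 0) (a : 𝕜) (E F K : A) :
    quantumTrace q (boundaryProjector q a E F K) = ((q * a - (q * a)⁻¹) / (a - a⁻¹)) • 1 := by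
  simp only [quantumTrace, boundaryProjector, boundaryMatrix, matrix_smul_fin_two, Matrix.of_apply,
    Matrix.cons_val_zero, Matrix.cons_val_one, Matrix.cons_val', Matrix.cons_val_fin_one]
  match_scalars <;> field_simp <;> ring

end QuantumTrace

section Verma

open scoped Kronecker

theorem ladderOp_ket (t : ℕ → Verma) (n : ℕ) : ladderOp t (ket n) = t n := by
  simp [ladderOp, ket]

theorem end_ext_ket {f g : Module.End ℂ Verma} (hfg : ∀ n, f (ket n) = g (ket n)) : f = g :=
  Finsupp.lhom_ext' fun n => LinearMap.ext_ring (hfg n)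

theorem qnum_zero (h : ℂ) : qnum h 0 = 0 := by simp [qnum]

theorem qnum_mul_qnum {h : ℂ} (hδ : Complex.exp h - Complex.exp (-h) ≠ 0) (x y : ℂ) :
    (Complex.exp h - Complex.exp (-h)) ^ 2 * (qnum h x * qnum h y) =
      Complex.exp (h * (x + y)) + Complex.exp (-(h * (x + y))) -
        Complex.exp (h * (x - y)) - Complex.exp (-(h * (x - y))) := by
  have hexp : Complex.exp (h * (x + y)) + Complex.exp (-(h * (x + y))) -
        Complex.exp (h * (x - y)) - Complex.exp (-(h * (x - y))) =
      (Complex.exp (h * x) - Complex.exp (-(h * x))) *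
        (Complex.exp (h * y) - Complex.exp (-(h * y))) := by
    simp only [mul_sub, sub_mul, ← Complex.exp_add]
    ring_nf
  rw [hexp, qnum, qnum]
  field_simp

theorem qnum_add_one_mul_sub_one (h x y : ℂ) :
    qnum h (x + 1) * qnum h (y - 1) - qnum h x * qnum h y = qnum h (y - x - 1) := by
  by_cases hδ : Complex.exp h - Complex.exp (-h) = 0
  · simp only [qnum, hδ, div_zero, mul_zero, sub_zero]
  have h_one : qnum h 1 = 1 := by simp [qnum, hδ]
  refine mul_left_cancel₀ (pow_ne_zero 2 hδ) ?_
  calc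
    _ = (Complex.exp h - Complex.exp (-h)) ^ 2 * (qnum h 1 * qnum h (y - x - 1)) := by
      simp only [mul_sub _ (_ * _), qnum_mul_qnum hδ]
      ring_nf
    _ = _ := by rw [h_one, one_mul]

theorem Eop_ket_succ (h α : ℂ) (n : ℕ) :
    Eop h α (ket (n + 1)) = (qnum h (n + 1) * qnum h (α - (n + 1))) • ket n := by
  simp [Eop, ladderOp_ket]

theorem Fop_ket (n : ℕ) : Fop (ket n) = ket (n + 1) :=
  ladderOp_ket _ n

theorem Kop_ket (h α : ℂ) (n : ℕ) :
    Kop h α (ket n) = Complex.exp (h * (α - 1 - 2 * n)) • ket n :=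
  ladderOp_ket _ n

theorem exp_weight_eq_sq_mul_exp_weight_succ (h α : ℂ) (n : ℕ) :
    Complex.exp (h * (α - 1 - 2 * n)) =
      Complex.exp h ^ 2 * Complex.exp (h * (α - 1 - 2 * (n + 1))) := by
  rw [← Complex.exp_nat_mul, ← Complex.exp_add]
  push_cast
  ring_nf

theorem Kinv_ket (h α : ℂ) (n : ℕ) :
    Kinv h α (ket n) = Complex.exp (-(h * (α - 1 - 2 * n))) • ket n :=
  ladderOp_ket _ n

theorem Eop_Fop_ket (h α : ℂ) (n : ℕ) :
    Eop h α (Fop (ket n)) = (qnum h (n + 1) * qnum h (α - n - 1)) • ket n := by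
  rw [Fop_ket, Eop_ket_succ, sub_sub]

theorem Fop_Eop_ket (h α : ℂ) (n : ℕ) :
    Fop (Eop h α (ket n)) = (qnum h n * qnum h (α - n)) • ket n := by
  rcases n with _ | n
  · simp [Eop, ladderOp_ket, qnum_zero]
  · rw [Eop_ket_succ, map_smul, Fop_ket, Nat.cast_succ]

theorem isQuantumSl2Triple_verma {h : ℂ} (hδ : Complex.exp h - Complex.exp (-h) ≠ 0) (α : ℂ) :
    IsQuantumSl2Triple (Complex.exp h) (Eop h α) Fop (Kop h α) (Kinv h α) where
  K_mul_K' := end_ext_ket fun n => by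
    simp [Kop_ket, Kinv_ket, smul_smul, ← Complex.exp_add]
  K'_mul_K := end_ext_ket fun n => by
    simp [Kop_ket, Kinv_ket, smul_smul, ← Complex.exp_add]
  K_mul_E := end_ext_ket fun n => by
    rcases n with _ | n
    · simp [Eop, ladderOp_ket, Kop_ket]
    · simp only [Module.End.mul_apply, LinearMap.smul_apply, map_smul, Eop_ket_succ, Kop_ket,
        exp_weight_eq_sq_mul_exp_weight_succ h α n, Nat.cast_succ]
      module
  F_mul_K := end_ext_ket fun n => by
    simp only [Module.End.mul_apply, LinearMap.smul_apply, map_smul, Fop_ket, Kop_ket,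
      exp_weight_eq_sq_mul_exp_weight_succ h α n, Nat.cast_succ, smul_smul]
  commutator := end_ext_ket fun n => by
    simp only [Module.End.mul_apply, LinearMap.smul_apply, LinearMap.sub_apply, Eop_Fop_ket,
      Fop_Eop_ket, Kop_ket, Kinv_ket, ← sub_smul, smul_smul]
    congr 1
    rw [qnum_add_one_mul_sub_one, qnum, ← Complex.exp_neg, mul_div_cancel₀ _ hδ]
    ring_nf

theorem quantumCasimir_verma {h : ℂ} (hδ : Complex.exp h - Complex.exp (-h) ≠ 0) (α : ℂ) :
    quantumCasimir (Complex.exp h) (Eop h α) Fop (Kop h α) (Kinv h α) =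
      (Complex.exp (h * α) + (Complex.exp (h * α))⁻¹) • 1 := end_ext_ket fun n => by
  simp only [quantumCasimir, LinearMap.add_apply, LinearMap.smul_apply, Module.End.mul_apply,
    Module.End.one_apply, Fop_Eop_ket, Kop_ket, Kinv_ket, smul_smul, ← add_smul, ← Complex.exp_neg]
  congr 1
  rw [qnum_mul_qnum hδ, ← Complex.exp_add, ← Complex.exp_add]
  ring_nf

theorem qnum_add_one_div_qnum {h : ℂ} (hδ : Complex.exp h - Complex.exp (-h) ≠ 0) (α : ℂ) :
    qnum h (α + 1) / qnum h α =
      (Complex.exp h * Complex.exp (h * α) - (Complex.exp h * Complex.exp (h * α))⁻¹) /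
        (Complex.exp (h * α) - (Complex.exp (h * α))⁻¹) := by
  rw [qnum, qnum, div_div_div_cancel_right₀ hδ]
  simp only [← Complex.exp_neg, ← Complex.exp_add]
  ring_nf

theorem eOp4_eq_map (h : ℂ) : eOp4 h = (eTL h).map (algebraMap ℂ (Module.End ℂ Verma)) := by
  ext1 p r
  simp [eOp4, Algebra.algebraMap_eq_smul_one]

theorem bSnd_eq_kronecker (h α : ℂ) :
    bSnd h α = (1 : Matrix (Fin 2) (Fin 2) (Module.End ℂ Verma)) ⊗ₖ bR h α := by
  ext1 p r
  simp [bSnd, Matrix.one_apply]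

theorem bR_eq_boundaryProjector (h α : ℂ) :
    bR h α = boundaryProjector (Complex.exp h) (Complex.exp (h * α)) (Eop h α) Fop (Kop h α) := by
  simp only [bR, boundaryProjector, boundaryMatrix, Complex.exp_neg]

theorem eOp4_mul_bSnd_mul_eOp4 {h : ℂ} (hδ : Complex.exp h - Complex.exp (-h) ≠ 0) (α : ℂ) :
    eOp4 h * bSnd h α * eOp4 h = (qnum h (α + 1) / qnum h α) • eOp4 h :=
  calc
    eOp4 h * bSnd h α * eOp4 h = (eTL h).map (· • quantumTrace (Complex.exp h) (bR h α)) := by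
      rw [eOp4_eq_map, bSnd_eq_kronecker]
      exact eTL_mul_kronecker_mul_eTL h (bR h α)
    _ = (qnum h (α + 1) / qnum h α) • eOp4 h := by
      rw [bR_eq_boundaryProjector, quantumTrace_boundaryProjector (Complex.exp_ne_zero h),
        qnum_add_one_div_qnum hδ]
      ext1 p r
      exact smul_comm (eTL h p r) _ (1 : Module.End ℂ Verma)

end Verma

/-- The right boundary operator `b_r` is an idempotent `U_q(sl_2)`-intertwiner
with blob weight `y_r = [α_r+1]_q/[α_r]_q`. -/
theorem bR_idempotent_intertwiner_blob_weight (h αr : ℂ) (hq : Complex.exp h ^ 2 ≠ 1)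
    (hαr : Complex.exp (h * αr) ≠ Complex.exp (-(h * αr))) :
    bR h αr * bR h αr = bR h αr ∧
    bR h αr * coE h αr = coE h αr * bR h αr ∧
    bR h αr * coF h = coF h * bR h αr ∧
    bR h αr * coK h αr = coK h αr * bR h αr ∧
    bR h αr * coKinv h αr = coKinv h αr * bR h αr ∧
    eOp4 h * bSnd h αr * eOp4 h = (qnum h (αr + 1) / qnum h αr) • eOp4 h := by
  have hq0 := Complex.exp_ne_zero h
  have hδ : Complex.exp h - (Complex.exp h)⁻¹ ≠ 0 := by
    rwa [sub_ne_zero, ne_eq, ← mul_eq_one_iff_eq_inv₀ hq0, ← sq]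
  have hδ' : Complex.exp h - Complex.exp (-h) ≠ 0 := by rwa [Complex.exp_neg]
  have ha : Complex.exp (h * αr) - (Complex.exp (h * αr))⁻¹ ≠ 0 := by
    rwa [← Complex.exp_neg, sub_ne_zero]
  have t := isQuantumSl2Triple_verma hδ' αr
  have hC := quantumCasimir_verma hδ' αr
  have tΔ := t.spinHalf_coproduct hq0
  refine ⟨?_, ?_, ?_, ?_, ?_, eOp4_mul_bSnd_mul_eOp4 hδ' αr⟩ <;>
    rw [bR_eq_boundaryProjector]
  · exact t.isIdempotentElem_boundaryProjector hq0 ha hC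
  · exact t.commute_boundaryProjector hq0 hδ hC (tΔ.commute_quantumCasimir_E hq0)
  · rw [coF, Complex.exp_neg]
    exact t.commute_boundaryProjector hq0 hδ hC (tΔ.commute_quantumCasimir_F hq0)
  · rw [coK, Complex.exp_neg]
    exact t.commute_boundaryProjector hq0 hδ hC (tΔ.commute_quantumCasimir_K hq0)
  · rw [coKinv, Complex.exp_neg]
    exact t.commute_boundaryProjector hq0 hδ hC (tΔ.commute_quantumCasimir_K' hq0)
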